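/- Let n ≥ 0, let x_1, …, x_n ∈ (0,1) be pairwise distinct and solve the algebraic system E^n_{4,9,12}, i.e. 4/x_i + 9/(x_i − 1) + Σ_{j≠i} 12/(x_j − x_i) = 0 for all 1 ≤ i ≤ n, and let w_1, …, w_n ∈ ℍ satisfy J(w_i) = x_i. Define f(τ) = η(τ)^4 / ( (J(τ) − 1) ∏_{i=1}^n (J(τ) − x_i)² ). Then: (1) f is holomorphic and nonvanishing at every τ ∈ ℍ with J(τ) ∉ {1, x_1, …, x_n}; (2) f has double poles with zero residues at τ = i and at each w_i, i.e. the limit as τ → w (τ ≠ w) of (d/dτ)[(τ − w)² f(τ)] is 0 for w = i and for each w = w_i; (3) for every τ ∈ ℍ with J(τ) ∉ {1, x_1, …, x_n}, one has (d/dτ)(f'(τ)/f(τ)) − (1/2)(f'(τ)/f(τ))² = 2π² ((12n+7)/6)² E4(τ); equivalently, any primitive h of f satisfies {h, τ} = 2π² (12n+7)²/36 · E4(τ). -/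

import Mathlib

open Complex Filter Topology

noncomputable section

/-- The nome `q = e^{2πiτ}`. -/
def qq (τ : ℂ) : ℂ := Complex.exp (2 * Real.pi * Complex.I * τ)

/-- The Eisenstein series `E₄(τ) = 1 + 240 Σ_{n≥1} σ₃(n) qⁿ`. -/
def E4 (τ : ℂ) : ℂ := 1 + 240 * ∑' n : ℕ, (∑ d ∈ (n + 1).divisors, (d : ℂ) ^ 3) * qq τ ^ (n + 1)

/-- The Eisenstein series `E₆(τ) = 1 − 504 Σ_{n≥1} σ₅(n) qⁿ`. -/
def E6 (τ : ℂ) : ℂ := 1 - 504 * ∑' n : ℕ, (∑ d ∈ (n + 1).divisors, (d : ℂ) ^ 5) * qq τ ^ (n + 1)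

/-- The normalized elliptic modular function `J = E₄³ / (E₄³ − E₆²)`. -/
def J (τ : ℂ) : ℂ := E4 τ ^ 3 / (E4 τ ^ 3 - E6 τ ^ 2)

/-- The Dedekind eta function `η(τ) = e^{πiτ/12} ∏_{n≥1} (1 − qⁿ)`. -/
def dedekindEta (τ : ℂ) : ℂ := Complex.exp (Real.pi * Complex.I * τ / 12) * ∏' n : ℕ, (1 - qq τ ^ (n + 1))

/-- The elliptic point `ρ = e^{2πi/3}`. -/
def rho : ℂ := Complex.exp (2 * Real.pi * Complex.I / 3)

/-- `f = η⁴ / ((J−1)·∏ᵢ(J−xᵢ)²)` where the `xᵢ ∈ (0,1)` solve the system `E^n_{4,9,12}`. -/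
def f7 (n : ℕ) (x : Fin n → ℝ) (z : ℂ) : ℂ :=
  dedekindEta z ^ 4 / ((J z - 1) * ∏ i, (J z - (x i : ℂ)) ^ 2)


section Ramanujan

open UpperHalfPlane hiding I J
open ModularForm EisensteinSeries Derivative
open scoped Manifold MatrixGroups CongruenceSubgroup Real

local notation "𝕢" => Function.Periodic.qParam

/-- A `q`-expansion computes the limit at `i∞`, where the normalized derivative vanishes. -/
lemma tendsto_atImInfty_of_hasSum {F : ℍ → ℂ} {c : ℕ → ℂ}
    (hF : ∀ τ : ℍ, HasSum (fun m ↦ c m • 𝕢 1 τ ^ m) (F τ)) :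
    Tendsto F atImInfty (𝓝 (c 0)) ∧
      Tendsto (normalizedDerivOfComplex F) atImInfty (𝓝 0) := by
  let p : FormalMultilinearSeries ℂ ℂ ℂ := .ofScalars ℂ c
  have hrad : 1 ≤ p.radius := by
    refine le_of_forall_lt_imp_le_of_dense fun r hr ↦ ?_
    rcases eq_or_ne r 0 with rfl | hr'
    · simp
    lift r to NNReal using hr.ne_top
    have hr1 : ‖((r : ℝ) : ℂ)‖ < 1 := by simpa using hr
    have hr0 : ((r : ℝ) : ℂ) ≠ 0 := by exact_mod_cast hr'
    have := (hF ⟨_, Function.Periodic.im_invQParam_pos_of_norm_lt_one one_pos hr1 hr0⟩).summable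
    simp only [Function.Periodic.qParam_right_inv one_ne_zero hr0] at this
    apply FormalMultilinearSeries.le_radius_of_summable
    simpa [p, FormalMultilinearSeries.ofScalars_norm] using this.norm
  have hp : HasFPowerSeriesOnBall p.sum p 0 1 :=
    (p.hasFPowerSeriesOnBall (one_pos.trans_le hrad)).mono one_pos hrad
  set g := p.sum
  have hball (τ : ℍ) : 𝕢 1 (τ : ℂ) ∈ Metric.eball (0 : ℂ) 1 := by
    rw [← ENNReal.coe_one, Metric.eball_coe, NNReal.coe_one, mem_ball_zero_iff]
    exact Function.Periodic.norm_qParam_lt_one one_pos τ.im_pos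
  have hFg (τ : ℍ) : F τ = g (𝕢 1 τ) := by
    have := hp.hasSum (hball τ)
    simp only [p, zero_add, FormalMultilinearSeries.ofScalars_apply_eq] at this
    exact (hF τ).unique this
  have hg0 : g 0 = c 0 := by
    rw [← hp.coeff_zero 0]
    simp [p, FormalMultilinearSeries.ofScalars]
  have hq := qParam_tendsto_atImInfty one_pos
  have han : AnalyticAt ℂ g 0 := hp.analyticAt
  refine ⟨?_, ?_⟩
  · rw [← hg0]
    exact (han.continuousAt.tendsto.comp hq).congr fun τ ↦ (hFg τ).symm
  · have hD (τ : ℍ) : normalizedDerivOfComplex F τ = 𝕢 1 τ * deriv g (𝕢 1 τ) := by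
      have hga : DifferentiableAt ℂ g (𝕢 1 τ) :=
        (hp.analyticAt_of_mem (hball τ)).differentiableAt
      have hqd : HasDerivAt (𝕢 1) (𝕢 1 τ * (2 * π * Complex.I)) τ := by
        have := ((hasDerivAt_id (τ : ℂ)).const_mul (2 * π * Complex.I)).cexp
        convert! this using 1
        · ext z
          simp [Function.Periodic.qParam]
        · simp [Function.Periodic.qParam]
      have hev : F ∘ ofComplex =ᶠ[𝓝 (τ : ℂ)] g ∘ 𝕢 1 := by
        filter_upwards [isOpen_upperHalfPlaneSet.mem_nhds τ.2] with z hz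
        simp [ofComplex_apply_of_im_pos hz, hFg]
      rw [normalizedDerivOfComplex, hev.deriv_eq, (hga.hasDerivAt.comp (τ : ℂ) hqd).deriv]
      field_simp
    have : Tendsto (fun τ : ℍ ↦ 𝕢 1 τ * deriv g (𝕢 1 τ)) atImInfty (𝓝 (0 * deriv g 0)) :=
      hq.mul (han.deriv.continuousAt.tendsto.comp hq)
    rw [zero_mul] at this
    exact this.congr fun τ ↦ (hD τ).symm

/-- A holomorphic function of weight `k < 12` and level one is determined by its limit at
`i∞`. -/
lemma eq_smul_of_tendsto_atImInfty {k : ℤ} (hk : k < 12) {F : ℍ → ℂ} (hF : MDiff F)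
    (hslash : ∀ γ : SL(2, ℤ), F ∣[k] γ = F) (G : ModularForm 𝒮ℒ k)
    (hG : Tendsto G atImInfty (𝓝 1)) {a : ℂ} (hlim : Tendsto F atImInfty (𝓝 a)) :
    F = a • (G : ℍ → ℂ) := by
  have hGs (γ : SL(2, ℤ)) : (G : ℍ → ℂ) ∣[k] γ = G :=
    SlashInvariantFormClass.slash_action_eq G (γ : GL (Fin 2) ℝ) ⟨γ, rfl⟩
  have hs (γ : SL(2, ℤ)) : (F - a • (G : ℍ → ℂ)) ∣[k] γ = F - a • (G : ℍ → ℂ) := by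
    rw [sub_eq_add_neg, SlashAction.add_slash, SlashAction.neg_slash, hslash,
      ModularForm.SL_smul_slash, hGs]
  have hz : Tendsto (F - a • (G : ℍ → ℂ)) atImInfty (𝓝 0) := by
    have := hlim.sub (hG.const_mul a)
    rwa [mul_one, sub_self] at this
  let f : CuspForm 𝒮ℒ k :=
    { toFun := F - a • (G : ℍ → ℂ)
      slash_action_eq' := by
        rintro _ ⟨γ, rfl⟩
        exact hs γ
      holo' := hF.sub (G.holo'.const_smul a)
      zero_at_cusps' := by
        intro c hc
        rw [Subgroup.IsArithmetic.isCusp_iff_isCusp_SL2Z] at hc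
        rw [OnePoint.isZeroAt_iff_forall_SL2Z hc]
        intro γ _
        rw [hs]
        exact hz }
  have hf : f = 0 :=
    rank_zero_iff_forall_zero.mp (CuspForm.rank_eq_zero_of_weight_lt_twelve hk) f
  have : F - a • (G : ℍ → ℂ) = 0 := congrArg DFunLike.coe hf
  exact sub_eq_zero.mp this

lemma tendsto_E_atImInfty {k : ℕ} (hk : 3 ≤ k) (hk2 : Even k) :
    Tendsto (ModularForm.E hk) atImInfty (𝓝 1) ∧
      Tendsto (normalizedDerivOfComplex (ModularForm.E hk)) atImInfty (𝓝 0) := by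
  have := tendsto_atImInfty_of_hasSum fun τ ↦ by
    simpa using ModularForm.hasSum_qExpansion (f := ModularForm.E hk) one_pos one_mem_strictPeriods_SL τ
  simpa [E_qExpansion_coeff_zero hk hk2] using this

lemma tendsto_E2_atImInfty :
    Tendsto EisensteinSeries.E2 atImInfty (𝓝 1) ∧
      Tendsto (normalizedDerivOfComplex EisensteinSeries.E2) atImInfty (𝓝 0) := by
  have := tendsto_atImInfty_of_hasSum (F := EisensteinSeries.E2) fun τ ↦ by
    simpa only [Function.Periodic.qParam, ofReal_one, div_one] using hasSum_qExpansion_E2 (z := τ)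
  simpa using this

lemma E_slash {k : ℕ} (hk : 3 ≤ k) (γ : SL(2, ℤ)) :
    (ModularForm.E hk : ℍ → ℂ) ∣[(k : ℤ)] γ = ModularForm.E hk :=
  SlashInvariantFormClass.slash_action_eq (ModularForm.E hk) (γ : GL (Fin 2) ℝ) ⟨γ, rfl⟩

lemma normalizedDeriv_E₄ (z : ℍ) :
    normalizedDerivOfComplex E₄ z = (EisensteinSeries.E2 z * E₄ z - E₆ z) / 3 := by
  have h4 := tendsto_E_atImInfty (k := 4) (by norm_num) ⟨2, rfl⟩
  have h6 := tendsto_E_atImInfty (k := 6) (by norm_num) ⟨3, rfl⟩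
  have hlim : Tendsto (serreDerivative (4 : ℤ) E₄) atImInfty (𝓝 (-1 / 3)) := by
    have := h4.2.sub ((tendsto_E2_atImInfty.1.const_mul (((4 : ℤ) : ℂ) * 12⁻¹)).mul h4.1)
    convert! this using 2
    norm_num
  have := eq_smul_of_tendsto_atImInfty (k := 6) (by norm_num)
    (serreDerivative_mdifferentiable _ E₄.holo')
    (fun γ ↦ serreDerivative_slash_invariant (k := 4) E₄.holo' (E_slash (k := 4) _ γ)) E₆ h6.1 hlim
  have := congrFun this z
  simp only [serreDerivative_apply, Pi.smul_apply, smul_eq_mul] at this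
  push_cast at this
  linear_combination this

lemma normalizedDeriv_E₆ (z : ℍ) :
    normalizedDerivOfComplex E₆ z = (EisensteinSeries.E2 z * E₆ z - E₄ z ^ 2) / 2 := by
  have h4 := tendsto_E_atImInfty (k := 4) (by norm_num) ⟨2, rfl⟩
  have h6 := tendsto_E_atImInfty (k := 6) (by norm_num) ⟨3, rfl⟩
  have hlim : Tendsto (serreDerivative (6 : ℤ) E₆) atImInfty (𝓝 (-1 / 2)) := by
    have := h6.2.sub ((tendsto_E2_atImInfty.1.const_mul (((6 : ℤ) : ℂ) * 12⁻¹)).mul h6.1)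
    convert! this using 2
    norm_num
  have h44 : Tendsto (E₄.mul E₄) atImInfty (𝓝 1) := by
    have := h4.1.mul h4.1
    rwa [mul_one] at this
  have hslash (γ : SL(2, ℤ)) : serreDerivative (6 : ℤ) E₆ ∣[(4 + 4 : ℤ)] γ =
      serreDerivative (6 : ℤ) E₆ :=
    serreDerivative_slash_invariant (k := 6) E₆.holo' (E_slash (k := 6) _ γ)
  have := eq_smul_of_tendsto_atImInfty (k := 4 + 4) (by norm_num)
    (serreDerivative_mdifferentiable _ E₆.holo') hslash
    (E₄.mul E₄) h44 hlim
  have := congrFun this z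
  simp only [serreDerivative_apply, Pi.smul_apply, smul_eq_mul, ModularForm.coe_mul,
    Pi.mul_apply] at this
  push_cast at this
  linear_combination this

lemma E2_slash_apply (γ : SL(2, ℤ)) (z : ℍ) :
    (EisensteinSeries.E2 ∣[(2 : ℤ)] γ) z =
      EisensteinSeries.E2 z + 12 * (2 * π * Complex.I)⁻¹ * (γ 1 0 / denom γ z) := by
  rw [E2_slash_action]
  simp only [Pi.sub_apply, Pi.smul_apply, D2, smul_eq_mul, riemannZeta_two]
  field_simp
  linear_combination -12 * (γ 1 0 : ℂ) * Complex.I_sq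

lemma normalizedDeriv_E2 (z : ℍ) :
    normalizedDerivOfComplex EisensteinSeries.E2 z =
      (EisensteinSeries.E2 z ^ 2 - E₄ z) / 12 := by
  have h4 := tendsto_E_atImInfty (k := 4) (by norm_num) ⟨2, rfl⟩
  have hlim : Tendsto (serreDerivative 1 EisensteinSeries.E2) atImInfty (𝓝 (-1 / 12)) := by
    have := tendsto_E2_atImInfty.2.sub
      ((tendsto_E2_atImInfty.1.const_mul ((1 : ℂ) * 12⁻¹)).mul tendsto_E2_atImInfty.1)
    convert! this using 2
    norm_num
  have hslash (γ : SL(2, ℤ)) : serreDerivative 1 EisensteinSeries.E2 ∣[(4 : ℤ)] γ =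
      serreDerivative 1 EisensteinSeries.E2 := by
    ext τ
    have hmod : EisensteinSeries.E2 ∣[(2 : ℤ)] γ = EisensteinSeries.E2 +
        fun z : ℍ ↦ 12 * (2 * π * Complex.I)⁻¹ * (γ 1 0 / denom γ z) :=
      funext (E2_slash_apply γ)
    have hden : HasDerivAt (fun z : ℂ ↦ denom γ z) (γ 1 0 : ℂ) (τ : ℂ) := by
      simpa [denom] using ((hasDerivAt_id (τ : ℂ)).const_mul (γ 1 0 : ℂ)).add_const (γ 1 1 : ℂ)
    have hd0 : denom γ τ ≠ 0 := denom_ne_zero γ τ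
    have hr : HasDerivAt
        (fun z : ℂ ↦ 12 * (2 * π * Complex.I)⁻¹ * ((γ 1 0 : ℂ) / denom γ z))
        (12 * (2 * π * Complex.I)⁻¹ * -((γ 1 0 : ℂ) / denom γ τ) ^ 2) (τ : ℂ) := by
      convert! ((hasDerivAt_const (τ : ℂ) (γ 1 0 : ℂ)).div hden hd0).const_mul
        (12 * (2 * π * Complex.I)⁻¹) using 1
      field_simp
      ring
    have hE2 := mdifferentiableAt_iff.mp (E2_mdifferentiable τ)
    have hleft : normalizedDerivOfComplex (EisensteinSeries.E2 ∣[(2 : ℤ)] γ) τ =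
        normalizedDerivOfComplex EisensteinSeries.E2 τ +
        (2 * π * Complex.I)⁻¹ *
          (12 * (2 * π * Complex.I)⁻¹ * -((γ 1 0 : ℂ) / denom γ τ) ^ 2) := by
      have hev : (EisensteinSeries.E2 ∣[(2 : ℤ)] γ) ∘ ofComplex =ᶠ[𝓝 (τ : ℂ)]
          fun z : ℂ ↦ (EisensteinSeries.E2 ∘ ofComplex) z +
            12 * (2 * π * Complex.I)⁻¹ * ((γ 1 0 : ℂ) / denom γ z) := by
        filter_upwards [isOpen_upperHalfPlaneSet.mem_nhds τ.2] with z hz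
        rw [hmod]
        simp [ofComplex_apply_of_im_pos hz]
      rw [normalizedDerivOfComplex, hev.deriv_eq, hE2.hasDerivAt.fun_add hr |>.deriv, mul_add]
      rfl
    have hright := congrFun (normalizedDerivOfComplex_SL_slash E2_mdifferentiable (k := 2)
      (γ := γ)) τ
    have hval := E2_slash_apply γ τ
    rw [hleft, Pi.sub_apply, hval, ModularForm.SL_slash_apply] at hright
    rw [ModularForm.SL_slash_apply] at hval
    rw [ModularForm.SL_slash_apply, serreDerivative_apply, serreDerivative_apply]
    have hsplit : denom γ τ ^ (-4 : ℤ) = (denom γ τ ^ (-2 : ℤ)) ^ 2 := by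
      rw [← zpow_natCast, ← zpow_mul]; norm_num
    have hsq := congrArg (· ^ 2) hval
    simp only [mul_pow, ← hsplit] at hsq
    norm_num at hright hsq ⊢
    linear_combination -hright - hsq / 12
  have := eq_smul_of_tendsto_atImInfty (k := 4) (by norm_num)
    (serreDerivative_mdifferentiable _ E2_mdifferentiable) hslash E₄ h4.1 hlim
  have := congrFun this z
  simp only [serreDerivative_apply, Pi.smul_apply, smul_eq_mul] at this
  linear_combination this

end Ramanujan

section Bridge

open UpperHalfPlane hiding I J
open ModularForm EisensteinSeries Derivative
open scoped Manifold MatrixGroups CongruenceSubgroup Real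

lemma E_eq_tsum {k : ℕ} (hk : 3 ≤ k) (hk2 : Even k) (z : ℍ) :
    ModularForm.E hk z = 1 - (2 * k / bernoulli k) *
      ∑' n : ℕ, (∑ d ∈ (n + 1).divisors, (d : ℂ) ^ (k - 1)) * qq z ^ (n + 1) := by
  rw [EisensteinSeries.q_expansion_bernoulli hk hk2 z]
  congr 2
  have := tsum_pnat_eq_tsum_succ
    (f := fun n : ℕ ↦ (ArithmeticFunction.sigma (k - 1) n : ℂ) * qq z ^ n)
  simp only [ArithmeticFunction.sigma_apply, Nat.cast_sum, Nat.cast_pow] at this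
  simpa only [ArithmeticFunction.sigma_apply, Nat.cast_sum, Nat.cast_pow, qq, zpow_natCast]
    using this

lemma E4_coe (z : ℍ) : E4 z = E₄ z := by
  rw [E_eq_tsum _ ⟨2, rfl⟩, show bernoulli 4 = -1 / 30 by decide +kernel, E4]
  norm_num

lemma E6_coe (z : ℍ) : E6 z = E₆ z := by
  rw [E_eq_tsum _ ⟨3, rfl⟩, show bernoulli 6 = 1 / 42 by decide +kernel, E6]
  norm_num

lemma dedekindEta_eq_eta (z : ℂ) : dedekindEta z = ModularForm.eta z := by
  rw [dedekindEta, ModularForm.eta]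
  congr 1
  · rw [Function.Periodic.qParam]
    congr 1
    push_cast
    ring
  · refine tprod_congr fun n ↦ ?_
    rw [eta_q_eq_pow, qq]

lemma hasDerivAt_of_normalizedDeriv {G : ℂ → ℂ} {F : ℍ → ℂ} (hF : MDiff F)
    (hG : ∀ z : ℍ, G z = F z) {z : ℂ} (hz : 0 < z.im) :
    HasDerivAt G (2 * π * Complex.I * normalizedDerivOfComplex F ⟨z, hz⟩) z := by
  have hev : G =ᶠ[𝓝 z] F ∘ ofComplex := by
    filter_upwards [isOpen_upperHalfPlaneSet.mem_nhds hz] with w hw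
    simpa [ofComplex_apply_of_im_pos hw] using hG ⟨w, hw⟩
  have := (mdifferentiableAt_iff.mp (hF ⟨z, hz⟩)).hasDerivAt
  convert! this.congr_of_eventuallyEq hev using 1
  rw [normalizedDerivOfComplex]
  field_simp

/-- The weight two Eisenstein series as a function on `ℂ`, with junk values off the upper
half-plane. -/
def quasiE2 (z : ℂ) : ℂ := EisensteinSeries.E2 (ofComplex z)

variable {z : ℂ}

lemma hasDerivAt_E4 (hz : 0 < z.im) :
    HasDerivAt E4 (2 * π * Complex.I * ((quasiE2 z * E4 z - E6 z) / 3)) z := by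
  convert! hasDerivAt_of_normalizedDeriv E₄.holo' E4_coe hz using 2
  erw [normalizedDeriv_E₄]
  rw [← E4_coe, ← E6_coe, quasiE2, ofComplex_apply_of_im_pos hz]

lemma hasDerivAt_E6 (hz : 0 < z.im) :
    HasDerivAt E6 (2 * π * Complex.I * ((quasiE2 z * E6 z - E4 z ^ 2) / 2)) z := by
  convert! hasDerivAt_of_normalizedDeriv E₆.holo' E6_coe hz using 2
  erw [normalizedDeriv_E₆]
  rw [← E4_coe, ← E6_coe, quasiE2, ofComplex_apply_of_im_pos hz]

lemma hasDerivAt_quasiE2 (hz : 0 < z.im) :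
    HasDerivAt quasiE2 (2 * π * Complex.I * ((quasiE2 z ^ 2 - E4 z) / 12)) z := by
  convert! hasDerivAt_of_normalizedDeriv E2_mdifferentiable (G := quasiE2)
    (fun w ↦ by rw [quasiE2, ofComplex_apply]) hz using 2
  rw [normalizedDeriv_E2, ← E4_coe, quasiE2, ofComplex_apply_of_im_pos hz]

lemma hasDerivAt_dedekindEta (hz : 0 < z.im) :
    HasDerivAt dedekindEta (2 * π * Complex.I * (quasiE2 z / 24) * dedekindEta z) z := by
  rw [funext dedekindEta_eq_eta]
  have h := (differentiableAt_eta_of_mem_upperHalfPlaneSet hz).hasDerivAt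
  have hl := logDeriv_eta_eq_E2 ⟨z, hz⟩
  convert! h using 1
  rw [logDeriv_apply, div_eq_iff (eta_ne_zero hz)] at hl
  rw [show deriv ModularForm.eta z = _ from hl, quasiE2, ofComplex_apply_of_im_pos hz]
  ring

lemma dedekindEta_ne_zero (hz : 0 < z.im) : dedekindEta z ≠ 0 := by
  rw [dedekindEta_eq_eta]
  exact eta_ne_zero hz

lemma E4_cube_sub_E6_sq_ne_zero (hz : 0 < z.im) : E4 z ^ 3 - E6 z ^ 2 ≠ 0 := by
  intro h
  apply discriminant_ne_zero ⟨z, hz⟩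
  rw [discriminant_eq_E₄_cube_sub_E₆_sq, ← E4_coe, ← E6_coe]
  simp [h]

lemma E6_I : E6 Complex.I = 0 := by
  have h := congrFun (E_slash (k := 6) (by norm_num) ModularGroup.S) UpperHalfPlane.I
  rw [ModularForm.SL_slash_apply, ModularGroup.denom_S] at h
  have hS : ModularGroup.S • UpperHalfPlane.I = UpperHalfPlane.I := by
    ext1
    rw [UpperHalfPlane.modular_S_smul]
    simp
  rw [hS, ← E6_coe] at h
  have hI : (UpperHalfPlane.I : ℂ) = Complex.I := rfl
  rw [hI] at h
  have hp : Complex.I ^ (-(6 : ℕ) : ℤ) = -1 := by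
    rw [zpow_neg, zpow_natCast, show (6 : ℕ) = 2 * 3 from rfl, pow_mul, I_sq]; norm_num
  rw [hp] at h
  linear_combination -h / 2

end Bridge

section Rational

variable {K ι : Type*} [Field K] [Fintype ι] {y : ι → K}

lemma two_mul_sum_sum_eq_symmetrized (c : ι → ι → K) :
    2 * ∑ i, ∑ k, c i k = ∑ i, ∑ k, (c i k + c k i) := by
  simp_rw [Finset.sum_add_distrib]
  rw [two_mul, Finset.sum_comm (f := fun i k ↦ c k i)]

lemma sum_sum_inv_sub [CharZero K] (y : ι → K) : ∑ i, ∑ k, (y i - y k)⁻¹ = 0 := by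
  have h : ∑ i, ∑ k, (y i - y k)⁻¹ = -∑ i, ∑ k, (y i - y k)⁻¹ := by
    conv_lhs => rw [Finset.sum_comm]
    simp_rw [← Finset.sum_neg_distrib, ← inv_neg, neg_sub]
  exact self_eq_neg.mp h

lemma sum_mul_sum_inv_sub (hy : Function.Injective y) :
    2 * ∑ i, y i * ∑ k, (y i - y k)⁻¹ = Fintype.card ι * (Fintype.card ι - 1) := by
  classical
  have hterm (i k : ι) : y i * (y i - y k)⁻¹ + y k * (y k - y i)⁻¹ = 1 - if i = k then 1 else 0 := by
    rcases eq_or_ne i k with rfl | h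
    · simp
    · have := sub_ne_zero.mpr (hy.ne h)
      rw [← neg_sub (y i) (y k), inv_neg, if_neg h]
      field_simp
      ring
  rw [Finset.sum_congr rfl fun i _ ↦ Finset.mul_sum _ _ (y i)]
  rw [two_mul_sum_sum_eq_symmetrized]
  simp_rw [hterm]
  simp
  ring

lemma sq_sum_inv_sub_sub_sum_sq (hy : Function.Injective y) {j : K} (hj : ∀ i, j ≠ y i) :
    (∑ i, (j - y i)⁻¹) ^ 2 - ∑ i, (j - y i)⁻¹ ^ 2 =
      2 * ∑ i, (j - y i)⁻¹ * ∑ k, (y i - y k)⁻¹ := by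
  classical
  have hterm (i k : ι) : (j - y i)⁻¹ * (y i - y k)⁻¹ + (j - y k)⁻¹ * (y k - y i)⁻¹ =
      (j - y i)⁻¹ * (j - y k)⁻¹ - if i = k then (j - y i)⁻¹ ^ 2 else 0 := by
    rcases eq_or_ne i k with rfl | h
    · simp [sq]
    · have := sub_ne_zero.mpr (hy.ne h)
      have h1 := sub_ne_zero.mpr (hj i)
      have h2 := sub_ne_zero.mpr (hj k)
      rw [← neg_sub (y i) (y k), inv_neg, if_neg h]
      field_simp
      ring
  rw [Finset.sum_congr rfl fun i _ ↦ Finset.mul_sum _ _ (j - y i)⁻¹]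
  rw [two_mul_sum_sum_eq_symmetrized]
  simp_rw [hterm, Finset.sum_sub_distrib]
  rw [sq, Finset.sum_mul_sum]
  simp

/-- The Riccati-type identity behind the residue-free system for the exponents `4, 9, 12`. -/
lemma rational_identity [CharZero K] (hy : Function.Injective y) (h0 : ∀ i, y i ≠ 0) (h1 : ∀ i, y i ≠ 1)
    (hsys : ∀ i, 4 / y i + 9 / (y i - 1) + 12 * ∑ k, (y i - y k)⁻¹ = 0)
    {j : K} (hj1 : j ≠ 1) (hj : ∀ i, j ≠ y i) :
    1 / 72 + ((j - 1)⁻¹ + ∑ i, 2 * (j - y i)⁻¹) * (7 * j / 6 - 2 / 3) +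
      j * (j - 1) * (-(j - 1)⁻¹ ^ 2 - ∑ i, 2 * (j - y i)⁻¹ ^ 2 +
        ((j - 1)⁻¹ + ∑ i, 2 * (j - y i)⁻¹) ^ 2 / 2) =
      (12 * Fintype.card ι + 7) ^ 2 / 72 := by
  have hq (i : ι) : (j - y i)⁻¹ * (13 * j - 4) + 12 * (j * (j - 1)) *
      ((j - y i)⁻¹ * ∑ k, (y i - y k)⁻¹) =
      13 + 12 * (j - 1) * ∑ k, (y i - y k)⁻¹ + 12 * (y i * ∑ k, (y i - y k)⁻¹) := by
    have h := hsys i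
    have := h0 i
    have := sub_ne_zero.mpr (h1 i)
    have := sub_ne_zero.mpr (hj i)
    generalize ∑ k, (y i - y k)⁻¹ = Q at *
    field_simp at h ⊢
    linear_combination h
  have hsum := Finset.sum_congr (rfl : Finset.univ = Finset.univ) fun i (_ : i ∈ Finset.univ) ↦ hq i
  simp only [Finset.sum_add_distrib, ← Finset.mul_sum, ← Finset.sum_mul, Finset.sum_const,
    Finset.card_univ, nsmul_eq_mul, sum_sum_inv_sub] at hsum
  have hb := sum_mul_sum_inv_sub hy
  have hc := sq_sum_inv_sub_sub_sum_sq hy hj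
  simp only [← Finset.mul_sum]
  have := sub_ne_zero.mpr hj1
  generalize ∑ i, (j - y i)⁻¹ * ∑ k, (y i - y k)⁻¹ = T at *
  generalize ∑ i, (j - y i)⁻¹ ^ 2 = U at *
  generalize ∑ i, (j - y i)⁻¹ = S at *
  rw [show U = S ^ 2 - 2 * T by linear_combination -hc]
  field_simp
  linear_combination 864 * (j - 1) * hsum + 5184 * (j - 1) * hb

end Rational

section Residue

/-- If `f` has a double pole at `w` and its Schwarz derivative stays bounded near `w`, then the
residue of `f` at `w` vanishes. -/
lemma tendsto_deriv_sq_mul_of_schwarz {f F φ : ℂ → ℂ} {w : ℂ} (hF : AnalyticAt ℂ F w)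
    (hFw : F w ≠ 0) (hf : ∀ᶠ z in 𝓝[≠] w, f z = F z / (z - w) ^ 2) (hφ : ContinuousAt φ w)
    (hS : ∀ᶠ z in 𝓝[≠] w,
      deriv (fun t ↦ deriv f t / f t) z - 1 / 2 * (deriv f z / f z) ^ 2 = φ z) :
    Tendsto (fun τ ↦ deriv (fun z ↦ (z - w) ^ 2 * f z) τ) (𝓝[≠] w) (𝓝 0) := by
  set L : ℂ → ℂ := fun z ↦ deriv F z / F z with hL
  have hLan : AnalyticAt ℂ L w := hF.deriv.div hF hFw
  have hFan : ∀ᶠ z in 𝓝[≠] w, AnalyticAt ℂ F z := hF.eventually_analyticAt.filter_mono inf_le_left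
  have hLan' : ∀ᶠ z in 𝓝[≠] w, AnalyticAt ℂ L z :=
    hLan.eventually_analyticAt.filter_mono inf_le_left
  have hF0 : ∀ᶠ z in 𝓝[≠] w, F z ≠ 0 :=
    (hF.continuousAt.eventually_ne hFw).filter_mono inf_le_left
  have hne : ∀ᶠ z in 𝓝[≠] w, z ≠ w := self_mem_nhdsWithin
  have hf' := eventually_nhdsNE_eventually_nhds_iff.mpr hf
  have hlog : ∀ᶠ z in 𝓝[≠] w, deriv f z / f z = L z - 2 * (z - w)⁻¹ := by
    filter_upwards [hf', hFan, hF0, hne] with z hz hFz hF0z hzw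
    have hzw' := sub_ne_zero.mpr hzw
    have hd := hFz.differentiableAt.hasDerivAt.div
      (((hasDerivAt_id z).sub_const w).pow 2) (pow_ne_zero 2 hzw')
    rw [(hd.congr_of_eventuallyEq hz).deriv, hz.self_of_nhds, hL]
    simp only [id, Pi.pow_apply]
    field_simp
    ring
  have hlim : Tendsto L (𝓝[≠] w) (𝓝 0) := by
    have hrhs : ContinuousAt (fun z ↦ (z - w) / 2 * (φ z - deriv L z + 1 / 2 * L z ^ 2)) w := by
      have := hLan.continuousAt
      have := hLan.deriv.continuousAt
      fun_prop
    have := hrhs.tendsto.mono_left (nhdsWithin_le_nhds (s := {w}ᶜ))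
    simp only [sub_self, zero_div, zero_mul] at this
    refine this.congr' ?_
    filter_upwards [eventually_nhdsNE_eventually_nhds_iff.mpr hlog, hS, hLan', hne]
      with z hz hSz hLz hzw
    have hzw' := sub_ne_zero.mpr hzw
    have hd := hLz.differentiableAt.hasDerivAt.sub
      ((((hasDerivAt_id z).sub_const w).inv hzw').const_mul 2)
    rw [(hd.congr_of_eventuallyEq hz).deriv, hz.self_of_nhds] at hSz
    rw [← hSz]
    simp only [id]
    field_simp
    ring
  have hLw : L w = 0 :=
    tendsto_nhds_unique (hLan.continuousAt.tendsto.mono_left nhdsWithin_le_nhds) hlim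
  have hFd : deriv F w = 0 := (div_eq_zero_iff.mp hLw).resolve_right hFw
  have := hF.deriv.continuousAt.tendsto.mono_left (nhdsWithin_le_nhds (s := {w}ᶜ))
  rw [hFd] at this
  refine this.congr' ?_
  filter_upwards [hf', eventually_nhdsNE_eventually_nhds_iff.mpr hne] with z hz hzw
  refine Filter.EventuallyEq.deriv_eq ?_
  filter_upwards [hz, hzw] with t ht htw
  have := sub_ne_zero.mpr htw
  rw [ht]
  field_simp

lemma exists_eq_sub_mul_of_hasDerivAt {g : ℂ → ℂ} {w a : ℂ} (hg : AnalyticAt ℂ g w)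
    (hgw : g w = 0) (hd : HasDerivAt g a w) (ha : a ≠ 0) :
    ∃ G : ℂ → ℂ, AnalyticAt ℂ G w ∧ G w ≠ 0 ∧ ∀ᶠ z in 𝓝 w, g z = (z - w) * G z := by
  have := hg.analyticOrderAt_eq_one_of_zero_deriv_ne_zero hgw (hd.deriv ▸ ha)
  simpa using hg.analyticOrderAt_eq_natCast.mp this

end Residue

section Modular

open scoped Real

variable {z : ℂ}

/-- The normalized derivative `(2πi)⁻¹ dJ/dτ`. -/
def normalizedDerivJ (z : ℂ) : ℂ := -(E4 z ^ 2 * E6 z) / (E4 z ^ 3 - E6 z ^ 2)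

lemma J_sub_one (hz : 0 < z.im) : J z - 1 = E6 z ^ 2 / (E4 z ^ 3 - E6 z ^ 2) := by
  have := E4_cube_sub_E6_sq_ne_zero hz
  rw [J]
  field_simp
  ring

lemma normalizedDerivJ_sq (hz : 0 < z.im) :
    normalizedDerivJ z ^ 2 = E4 z * J z * (J z - 1) := by
  have := E4_cube_sub_E6_sq_ne_zero hz
  rw [J_sub_one hz, J, normalizedDerivJ]
  field_simp

lemma hasDerivAt_E4_cube_sub_E6_sq (hz : 0 < z.im) :
    HasDerivAt (fun z ↦ E4 z ^ 3 - E6 z ^ 2)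
      (2 * π * I * (quasiE2 z * (E4 z ^ 3 - E6 z ^ 2))) z := by
  convert! ((hasDerivAt_E4 hz).pow 3).sub ((hasDerivAt_E6 hz).pow 2) using 1
  push_cast
  ring

lemma hasDerivAt_J (hz : 0 < z.im) : HasDerivAt J (2 * π * I * normalizedDerivJ z) z := by
  have := E4_cube_sub_E6_sq_ne_zero hz
  convert! ((hasDerivAt_E4 hz).pow 3).div (hasDerivAt_E4_cube_sub_E6_sq hz) this using 1
  rw [normalizedDerivJ]
  simp only [Pi.pow_apply]
  push_cast
  field_simp
  ring

lemma hasDerivAt_normalizedDerivJ (hz : 0 < z.im) :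
    HasDerivAt normalizedDerivJ (2 * π * I *
      (quasiE2 z * normalizedDerivJ z / 6 + E4 z * (7 * J z / 6 - 2 / 3))) z := by
  have := E4_cube_sub_E6_sq_ne_zero hz
  convert! ((((hasDerivAt_E4 hz).pow 2).mul (hasDerivAt_E6 hz)).neg).div
    (hasDerivAt_E4_cube_sub_E6_sq hz) this using 1
  rw [normalizedDerivJ, J]
  simp only [Pi.pow_apply, Pi.mul_apply, Pi.neg_apply]
  push_cast
  field_simp
  ring

variable {n : ℕ} {x : Fin n → ℝ}

lemma hasDerivAt_f7 (hz : 0 < z.im) (h1 : J z ≠ 1) (hx : ∀ i, J z ≠ x i) :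
    HasDerivAt (f7 n x) (2 * π * I * (quasiE2 z / 6 - normalizedDerivJ z *
      ((J z - 1)⁻¹ + ∑ i, 2 * (J z - x i)⁻¹)) * f7 n x z) z := by
  have hJ := hasDerivAt_J hz
  have h1' := sub_ne_zero.mpr h1
  have hx' i := sub_ne_zero.mpr (hx i)
  have hprod : HasDerivAt (fun z ↦ ∏ i, (J z - x i) ^ 2)
      (2 * π * I * normalizedDerivJ z * (∑ i, 2 * (J z - x i)⁻¹) * ∏ i, (J z - x i) ^ 2) z := by
    convert! HasDerivAt.fun_finsetProd (u := Finset.univ)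
      fun i _ ↦ (hJ.sub_const (x i : ℂ)).fun_pow 2 using 1
    rw [Finset.mul_sum, Finset.sum_mul]
    refine Finset.sum_congr rfl fun i _ ↦ ?_
    rw [← Finset.mul_prod_erase _ _ (Finset.mem_univ i)]
    have := hx' i
    simp only [smul_eq_mul]
    push_cast
    field_simp
  have hP : ∏ i, (J z - x i) ^ 2 ≠ 0 := Finset.prod_ne_zero_iff.mpr fun i _ ↦ pow_ne_zero 2 (hx' i)
  convert! ((hasDerivAt_dedekindEta hz).pow 4).div ((hJ.sub_const 1).mul hprod)
    (mul_ne_zero h1' hP) using 1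
  rw [f7]
  simp only [Pi.pow_apply, Pi.mul_apply]
  generalize ∏ i, (J z - x i) ^ 2 = P at *
  generalize ∑ i, 2 * (J z - x i)⁻¹ = S at *
  push_cast
  field_simp
  ring

lemma f7_ne_zero (hz : 0 < z.im) (h1 : J z ≠ 1) (hx : ∀ i, J z ≠ x i) : f7 n x z ≠ 0 :=
  div_ne_zero (pow_ne_zero 4 (dedekindEta_ne_zero hz)) <| mul_ne_zero (sub_ne_zero.mpr h1) <|
    Finset.prod_ne_zero_iff.mpr fun i _ ↦ pow_ne_zero 2 (sub_ne_zero.mpr (hx i))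

lemma eventually_admissible (hz : 0 < z.im) (h1 : J z ≠ 1) (hx : ∀ i, J z ≠ x i) :
    ∀ᶠ t in 𝓝 z, 0 < t.im ∧ J t ≠ 1 ∧ ∀ i, J t ≠ x i := by
  have hJ := (hasDerivAt_J hz).continuousAt
  refine (continuous_im.continuousAt.eventually_const_lt hz).and <|
    (hJ.eventually_ne h1).and <| eventually_all.mpr fun i ↦ hJ.eventually_ne (hx i)

/-- The residue-free system for the exponents `4, 9, 12`. -/
def IsResidueFree (x : Fin n → ℝ) : Prop :=
  ∀ i, 4 / x i + 9 / (x i - 1) + ∑ j ∈ Finset.univ.erase i, 12 / (x i - x j) = 0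

lemma schwarz_f7 (hx : ∀ i, x i ∈ Set.Ioo (0 : ℝ) 1) (hinj : Function.Injective x)
    (hsys : IsResidueFree x) (hz : 0 < z.im) (h1 : J z ≠ 1) (hJx : ∀ i, J z ≠ x i) :
    deriv (fun t ↦ deriv (f7 n x) t / f7 n x t) z - 1 / 2 * (deriv (f7 n x) z / f7 n x z) ^ 2 =
      2 * (π : ℂ) ^ 2 * ((12 * (n : ℂ) + 7) / 6) ^ 2 * E4 z := by
  have hlog : (fun t ↦ deriv (f7 n x) t / f7 n x t) =ᶠ[𝓝 z] fun t ↦ 2 * π * I *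
      (quasiE2 t / 6 - normalizedDerivJ t * ((J t - 1)⁻¹ + ∑ i, 2 * (J t - x i)⁻¹)) := by
    filter_upwards [eventually_admissible hz h1 hJx] with t ht
    rw [(hasDerivAt_f7 ht.1 ht.2.1 ht.2.2).deriv, mul_div_assoc,
      div_self (f7_ne_zero ht.1 ht.2.1 ht.2.2), mul_one]
  have hJ := hasDerivAt_J hz
  have hsum : HasDerivAt (fun t ↦ ∑ i, 2 * (J t - x i)⁻¹)
      (-(2 * π * I * normalizedDerivJ z) * ∑ i, 2 * (J z - x i)⁻¹ ^ 2) z := by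
    convert! HasDerivAt.fun_sum (u := Finset.univ) fun i _ ↦
      ((hJ.sub_const (x i : ℂ)).fun_inv (sub_ne_zero.mpr (hJx i))).const_mul 2 using 1
    rw [Finset.mul_sum]
    refine Finset.sum_congr rfl fun i _ ↦ ?_
    have := sub_ne_zero.mpr (hJx i)
    field_simp
  have h1' := sub_ne_zero.mpr h1
  have hd := (((hasDerivAt_quasiE2 hz).div_const 6).fun_sub
    ((hasDerivAt_normalizedDerivJ hz).fun_mul (((hJ.sub_const 1).fun_inv h1').fun_add hsum))).const_mul (2 * π * I)
  have hy : Function.Injective fun i ↦ (x i : ℂ) := ofReal_injective.comp hinj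
  have hrat := rational_identity hy (fun i ↦ ofReal_ne_zero.mpr (hx i).1.ne')
    (fun i ↦ by exact_mod_cast (hx i).2.ne) (fun i ↦ by
      have := hsys i
      rw [← Finset.add_sum_erase _ _ (Finset.mem_univ i)]
      simp only [div_eq_mul_inv, ← Finset.mul_sum] at this ⊢
      simp only [sub_self, inv_zero, zero_add]
      exact_mod_cast this) h1 hJx
  have hval := hlog.self_of_nhds
  dsimp only at hval
  rw [hlog.deriv_eq, hval, HasDerivAt.deriv hd]
  have hu := normalizedDerivJ_sq hz
  rw [Fintype.card_fin] at hrat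
  rw [div_eq_mul_inv (-_) ((J z - 1) ^ 2), ← inv_pow]
  generalize ∑ i, 2 * (J z - x i)⁻¹ = S at *
  generalize ∑ i, 2 * (J z - x i)⁻¹ ^ 2 = S2 at *
  linear_combination
    -(2 * π * I) ^ 2 * (-(J z - 1)⁻¹ ^ 2 - S2 + ((J z - 1)⁻¹ + S) ^ 2 / 2) * hu -
    (2 * π * I) ^ 2 * E4 z * hrat - π ^ 2 * E4 z * (12 * n + 7) ^ 2 / 18 * I_sq

lemma analyticAt_of_forall_hasDerivAt {g g' : ℂ → ℂ}
    (hg : ∀ t : ℂ, 0 < t.im → HasDerivAt g (g' t) t) (hz : 0 < z.im) : AnalyticAt ℂ g z :=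
  DifferentiableOn.analyticAt (s := {t : ℂ | 0 < t.im})
    (fun t ht ↦ (hg t ht).differentiableAt.differentiableWithinAt)
    ((isOpen_lt continuous_const continuous_im).mem_nhds hz)

lemma tendsto_deriv_sq_mul_f7 (hx : ∀ i, x i ∈ Set.Ioo (0 : ℝ) 1) (hinj : Function.Injective x)
    (hsys : IsResidueFree x) (hz : 0 < z.im)
    (hadm : ∀ᶠ t in 𝓝[≠] z, J t ≠ 1 ∧ ∀ i, J t ≠ x i) {F : ℂ → ℂ} (hF : AnalyticAt ℂ F z)
    (hFz : F z ≠ 0) (hf : ∀ᶠ t in 𝓝[≠] z, f7 n x t = F t / (t - z) ^ 2) :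
    Tendsto (fun τ ↦ deriv (fun t ↦ (t - z) ^ 2 * f7 n x t) τ) (𝓝[≠] z) (𝓝 0) := by
  have him : ∀ᶠ t in 𝓝[≠] z, 0 < t.im :=
    (continuous_im.continuousAt.eventually_const_lt hz).filter_mono inf_le_left
  refine tendsto_deriv_sq_mul_of_schwarz hF hFz hf
    ((hasDerivAt_E4 hz).continuousAt.const_mul (2 * (π : ℂ) ^ 2 * ((12 * (n : ℂ) + 7) / 6) ^ 2)) ?_
  filter_upwards [hadm, him] with t ht hit
  exact schwarz_f7 hx hinj hsys hit ht.1 ht.2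

lemma J_I : J I = 1 := by
  have := E4_cube_sub_E6_sq_ne_zero (z := I) (by simp)
  rw [J, E6_I]
  simp_all [E6_I]

lemma tendsto_deriv_sq_mul_f7_I (hx : ∀ i, x i ∈ Set.Ioo (0 : ℝ) 1)
    (hinj : Function.Injective x) (hsys : IsResidueFree x) :
    Tendsto (fun τ ↦ deriv (fun t ↦ (t - I) ^ 2 * f7 n x t) τ) (𝓝[≠] I) (𝓝 0) := by
  have hI : 0 < I.im := by simp
  have hΔ := E4_cube_sub_E6_sq_ne_zero hI
  have hE4 : E4 I ≠ 0 := by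
    rintro h
    simp [h, E6_I] at hΔ
  obtain ⟨G, hG, hG0, hEG⟩ := exists_eq_sub_mul_of_hasDerivAt
    (analyticAt_of_forall_hasDerivAt (fun _ ↦ hasDerivAt_E6) hI) E6_I (hasDerivAt_E6 hI)
    (by simp [E6_I, hE4, Real.pi_ne_zero])
  have hJ := (hasDerivAt_J hI).continuousAt
  have hJx (i : Fin n) : J I ≠ x i := by
    rw [J_I]
    exact_mod_cast (hx i).2.ne'
  have hJx' : ∀ᶠ t in 𝓝[≠] I, ∀ i, J t ≠ x i :=
    (eventually_all.mpr fun i ↦ hJ.eventually_ne (hJx i)).filter_mono inf_le_left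
  have hne : ∀ᶠ t in 𝓝[≠] I, t ≠ I := self_mem_nhdsWithin
  have him : ∀ᶠ t in 𝓝[≠] I, 0 < t.im :=
    (continuous_im.continuousAt.eventually_const_lt hI).filter_mono inf_le_left
  have hEG' := hEG.filter_mono (inf_le_left : 𝓝[≠] I ≤ 𝓝 I)
  have hGne := (hG.continuousAt.eventually_ne hG0).filter_mono (inf_le_left : 𝓝[≠] I ≤ 𝓝 I)
  have hη := analyticAt_of_forall_hasDerivAt (fun _ ↦ hasDerivAt_dedekindEta) hI
  have hΔan := analyticAt_of_forall_hasDerivAt (fun _ ↦ hasDerivAt_E4_cube_sub_E6_sq) hI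
  have hJan := analyticAt_of_forall_hasDerivAt (fun _ ↦ hasDerivAt_J) hI
  have hden : G I ^ 2 * ∏ i, (J I - x i) ^ 2 ≠ 0 := mul_ne_zero (pow_ne_zero 2 hG0) <|
    Finset.prod_ne_zero_iff.mpr fun i _ ↦ pow_ne_zero 2 (sub_ne_zero.mpr (hJx i))
  refine tendsto_deriv_sq_mul_f7 hx hinj hsys hI ?_
    (F := fun t ↦ dedekindEta t ^ 4 * (E4 t ^ 3 - E6 t ^ 2) / (G t ^ 2 * ∏ i, (J t - x i) ^ 2))
    (((hη.fun_pow 4).fun_mul hΔan).fun_div ((hG.fun_pow 2).fun_mul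
      (Finset.analyticAt_fun_prod _ fun i _ ↦ (hJan.fun_sub analyticAt_const).fun_pow 2)) hden)
    (div_ne_zero (mul_ne_zero (pow_ne_zero 4 (dedekindEta_ne_zero hI)) hΔ) hden) ?_
  · filter_upwards [hJx', hne, him, hEG', hGne] with t h1 h2 h3 h4 h5
    refine ⟨?_, h1⟩
    rw [← sub_ne_zero, J_sub_one h3, h4]
    exact div_ne_zero (pow_ne_zero 2 (mul_ne_zero (sub_ne_zero.mpr h2) h5))
      (h4 ▸ E4_cube_sub_E6_sq_ne_zero h3)
  · filter_upwards [him, hEG'] with t h3 h4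
    have := E4_cube_sub_E6_sq_ne_zero h3
    rw [f7, J_sub_one h3]
    rw [h4] at this ⊢
    field_simp

lemma tendsto_deriv_sq_mul_f7_of_J_eq (hx : ∀ i, x i ∈ Set.Ioo (0 : ℝ) 1)
    (hinj : Function.Injective x) (hsys : IsResidueFree x) (hz : 0 < z.im) {i : Fin n}
    (hJz : J z = x i) :
    Tendsto (fun τ ↦ deriv (fun t ↦ (t - z) ^ 2 * f7 n x t) τ) (𝓝[≠] z) (𝓝 0) := by
  have h0 : J z ≠ 0 := by rw [hJz]; exact_mod_cast (hx i).1.ne'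
  have h1 : J z ≠ 1 := by rw [hJz]; exact_mod_cast (hx i).2.ne
  have hE4 : E4 z ≠ 0 := fun h ↦ h0 (by simp [J, h])
  have hu : normalizedDerivJ z ≠ 0 := by
    refine pow_ne_zero_iff two_ne_zero |>.mp ?_
    rw [normalizedDerivJ_sq hz]
    exact mul_ne_zero (mul_ne_zero hE4 h0) (sub_ne_zero.mpr h1)
  have hJan := analyticAt_of_forall_hasDerivAt (fun _ ↦ hasDerivAt_J) hz
  have hη := analyticAt_of_forall_hasDerivAt (fun _ ↦ hasDerivAt_dedekindEta) hz
  obtain ⟨G, hG, hG0, hJG⟩ := exists_eq_sub_mul_of_hasDerivAt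
    (hJan.fun_sub analyticAt_const) (sub_eq_zero.mpr hJz) ((hasDerivAt_J hz).sub_const _)
    (by simp [hu, Real.pi_ne_zero])
  have hJx (k : Fin n) (hk : k ≠ i) : J z ≠ x k := by
    rw [hJz]
    exact_mod_cast hinj.ne hk.symm
  have hJ := (hasDerivAt_J hz).continuousAt
  have hJx' : ∀ᶠ t in 𝓝[≠] z, J t ≠ 1 ∧ ∀ k, k ≠ i → J t ≠ x k :=
    ((hJ.eventually_ne h1).and (eventually_all.mpr fun k ↦ eventually_imp_distrib_left.mpr
      fun hk ↦ hJ.eventually_ne (hJx k hk))).filter_mono inf_le_left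
  have hne : ∀ᶠ t in 𝓝[≠] z, t ≠ z := self_mem_nhdsWithin
  have hJG' := hJG.filter_mono (inf_le_left : 𝓝[≠] z ≤ 𝓝 z)
  have hGne := (hG.continuousAt.eventually_ne hG0).filter_mono (inf_le_left : 𝓝[≠] z ≤ 𝓝 z)
  have hden : (J z - 1) * (G z ^ 2 * ∏ k ∈ Finset.univ.erase i, (J z - x k) ^ 2) ≠ 0 :=
    mul_ne_zero (sub_ne_zero.mpr h1) <| mul_ne_zero (pow_ne_zero 2 hG0) <|
      Finset.prod_ne_zero_iff.mpr fun k hk ↦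
        pow_ne_zero 2 (sub_ne_zero.mpr (hJx k (Finset.ne_of_mem_erase hk)))
  refine tendsto_deriv_sq_mul_f7 hx hinj hsys hz ?_
    (F := fun t ↦ dedekindEta t ^ 4 /
      ((J t - 1) * (G t ^ 2 * ∏ k ∈ Finset.univ.erase i, (J t - x k) ^ 2)))
    ((hη.fun_pow 4).fun_div ((hJan.fun_sub analyticAt_const).fun_mul ((hG.fun_pow 2).fun_mul
      (Finset.analyticAt_fun_prod _ fun k _ ↦ (hJan.fun_sub analyticAt_const).fun_pow 2))) hden)
    (div_ne_zero (pow_ne_zero 4 (dedekindEta_ne_zero hz)) hden) ?_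
  · filter_upwards [hJx', hne, hJG', hGne] with t ht htz htG hGt
    refine ⟨ht.1, fun k ↦ ?_⟩
    rcases eq_or_ne k i with rfl | hk
    · rw [← sub_ne_zero, htG]
      exact mul_ne_zero (sub_ne_zero.mpr htz) hGt
    · exact ht.2 k hk
  · filter_upwards [hJG'] with t htG
    rw [f7, ← Finset.mul_prod_erase _ _ (Finset.mem_univ i), htG, div_div]
    congr 1
    ring

/-- With the opposite sign in the interaction term the system has at most one unknown, as the
smallest `xᵢ` is at least `4 / 13` and the largest is at most `4 / 13`. -/
lemma isResidueFree_of_reversed_sign (hx : ∀ i, x i ∈ Set.Ioo (0 : ℝ) 1)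
    (hinj : Function.Injective x)
    (hsys : ∀ i, 4 / x i + 9 / (x i - 1) + ∑ j ∈ Finset.univ.erase i, 12 / (x j - x i) = 0) :
    IsResidueFree x := by
  have hφ (i : Fin n) : 4 / x i + 9 / (x i - 1) = (4 - 13 * x i) / (x i * (1 - x i)) := by
    have h0 := (hx i).1.ne'
    have h1 := sub_ne_zero.mpr (hx i).2.ne
    have h2 := sub_ne_zero.mpr (hx i).2.ne'
    field_simp
    ring
  have hpos (i : Fin n) : 0 < x i * (1 - x i) := mul_pos (hx i).1 (sub_pos.mpr (hx i).2)
  intro i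
  have : Nonempty (Fin n) := ⟨i⟩
  obtain ⟨a, ha⟩ := Finite.exists_min x
  obtain ⟨b, hb⟩ := Finite.exists_max x
  have hmin : 4 / 13 ≤ x a := by
    have hnn : 0 ≤ ∑ j ∈ Finset.univ.erase a, 12 / (x j - x a) :=
      Finset.sum_nonneg fun j _ ↦ div_nonneg (by norm_num) (sub_nonneg.mpr (ha j))
    have h := hsys a
    rw [hφ] at h
    by_contra! hlt
    have := div_pos (by linarith : 0 < 4 - 13 * x a) (hpos a)
    linarith
  have hmax : x b ≤ 4 / 13 := by
    have hnp : ∑ j ∈ Finset.univ.erase b, 12 / (x j - x b) ≤ 0 :=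
      Finset.sum_nonpos fun j _ ↦ div_nonpos_of_nonneg_of_nonpos (by norm_num)
        (sub_nonpos.mpr (hb j))
    have h := hsys b
    rw [hφ] at h
    by_contra! hlt
    have := div_neg_of_neg_of_pos (by linarith : 4 - 13 * x b < 0) (hpos b)
    linarith
  have hall (j : Fin n) : j = i :=
    hinj (by linarith [ha i, hb i, ha j, hb j])
  have hempty : Finset.univ.erase i = (∅ : Finset (Fin n)) :=
    Finset.eq_empty_of_forall_notMem fun j hj ↦ Finset.ne_of_mem_erase hj (hall j)
  have h := hsys i
  rw [hempty] at h ⊢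
  simpa using h

end Modular

/-- If the `xᵢ ∈ (0,1)` solve `E^n_{4,9,12}`, then `f = η⁴/((J−1)∏(J−xᵢ)²)` is holomorphic and
nonvanishing away from the poles, has double poles with zero residues at `i` and each `wᵢ`, and
any primitive `h` of `f` satisfies `{h,τ} = 2π²((12n+7)/6)² E₄(τ)`. -/
theorem solution_12n_plus_7 (n : ℕ) (x : Fin n → ℝ) (w : Fin n → ℂ)
    (hx : ∀ i, x i ∈ Set.Ioo (0 : ℝ) 1) (hinj : Function.Injective x)
    (hsys : ∀ i, 4 / x i + 9 / (x i - 1) +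
      ∑ j ∈ Finset.univ.erase i, 12 / (x j - x i) = 0)
    (hw : ∀ i, 0 < (w i).im) (hJw : ∀ i, J (w i) = (x i : ℂ)) :
    (∀ τ : ℂ, 0 < τ.im → J τ ≠ 1 → (∀ i, J τ ≠ (x i : ℂ)) →
      DifferentiableAt ℂ (f7 n x) τ ∧ f7 n x τ ≠ 0) ∧
    (Tendsto
      (fun τ : ℂ => deriv (fun z : ℂ => (z - Complex.I) ^ 2 * f7 n x z) τ)
      (𝓝[≠] Complex.I) (𝓝 0) ∧
     ∀ i, Tendsto
      (fun τ : ℂ => deriv (fun z : ℂ => (z - w i) ^ 2 * f7 n x z) τ)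
      (𝓝[≠] w i) (𝓝 0)) ∧
    (∀ τ : ℂ, 0 < τ.im → J τ ≠ 1 → (∀ i, J τ ≠ (x i : ℂ)) →
      deriv (fun z : ℂ => deriv (f7 n x) z / f7 n x z) τ -
        1 / 2 * (deriv (f7 n x) τ / f7 n x τ) ^ 2 =
        2 * (Real.pi : ℂ) ^ 2 * ((12 * (n : ℂ) + 7) / 6) ^ 2 * E4 τ) := by
  have hfree := isResidueFree_of_reversed_sign hx hinj hsys
  exact ⟨fun τ hτ h1 hJx ↦ ⟨(hasDerivAt_f7 hτ h1 hJx).differentiableAt, f7_ne_zero hτ h1 hJx⟩,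
    ⟨tendsto_deriv_sq_mul_f7_I hx hinj hfree,
      fun i ↦ tendsto_deriv_sq_mul_f7_of_J_eq hx hinj hfree (hw i) (hJw i)⟩,
    fun τ hτ h1 hJx ↦ schwarz_f7 hx hinj hfree hτ h1 hJx⟩
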